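/- Let 0 < γ < p ≤ ∞ and 0 ≤ τ < 1/p (also allowing the cases τ = 1/p via M^p_{1/p} = L^∞ and τ > 1/p via M^p_τ = {0}). Then there is C > 0 such that for every g ∈ L^p_loc(ℝⁿ), ‖ (M(|g|^γ))^{1/γ} ‖_{M^p_τ} ≤ C ‖g‖_{M^p_τ}, where M is the Hardy–Littlewood maximal operator and ‖f‖_{M^p_τ} = sup_{J∈ℤ,v∈ℤⁿ} 2^{nJτ}‖f‖_{L^p(Q_{J,v})}. -/

import Mathlib

open MeasureTheory
open scoped ENNReal NNReal

/-- The open dyadic cube `Q_{J,v} = 2^{−J}v + (0, 2^{−J})ⁿ`. -/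
def dyadicCube (n : ℕ) (J : ℤ) (v : Fin n → ℤ) : Set (EuclideanSpace ℝ (Fin n)) :=
  {x | ∀ i, (2 : ℝ) ^ (-J) * (v i : ℝ) < x i ∧ x i < (2 : ℝ) ^ (-J) * ((v i : ℝ) + 1)}

/-- The `L^p` (quasi-)norm (`0 < p ≤ ∞`) of a `[0,∞]`-valued function on a set `s ⊆ ℝⁿ`. -/
noncomputable def LpOn {n : ℕ} (p : ℝ≥0∞) (F : EuclideanSpace ℝ (Fin n) → ℝ≥0∞)
    (s : Set (EuclideanSpace ℝ (Fin n))) : ℝ≥0∞ :=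
  if p = ∞ then essSup F (volume.restrict s)
  else (∫⁻ x in s, F x ^ p.toReal) ^ (1 / p.toReal)

/-- The Morrey norm `‖F‖_{M^p_τ} = sup_{J,v} 2^{nJτ} ‖F‖_{L^p(Q_{J,v})}`. -/
noncomputable def morreyNormE (n : ℕ) (p : ℝ≥0∞) (τ : ℝ)
    (F : EuclideanSpace ℝ (Fin n) → ℝ≥0∞) : ℝ≥0∞ :=
  ⨆ (J : ℤ) (v : Fin n → ℤ),
    ENNReal.ofReal ((2 : ℝ) ^ ((n : ℝ) * (J : ℝ) * τ)) * LpOn p F (dyadicCube n J v)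

/-- The Hardy–Littlewood maximal function
`M g (x) = sup_{R>0} |B(0,R)|⁻¹ ∫_{B(x,R)} g`. -/
noncomputable def HLmax {n : ℕ} (g : EuclideanSpace ℝ (Fin n) → ℝ≥0∞)
    (x : EuclideanSpace ℝ (Fin n)) : ℝ≥0∞ :=
  ⨆ R : Set.Ioi (0 : ℝ), (volume (Metric.ball x (R : ℝ)))⁻¹ * ∫⁻ y in Metric.ball x (R : ℝ), g y

/-! ### The Hardy–Littlewood maximal operator -/

section Maximal

variable {n : ℕ}

local notation "E" => EuclideanSpace ℝ (Fin n)

lemma le_HLmax (f : E → ℝ≥0∞) (x : E) {R : ℝ} (hR : 0 < R) :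
    (volume (Metric.ball x R))⁻¹ * ∫⁻ y in Metric.ball x R, f y ≤ HLmax f x :=
  le_iSup (fun R : Set.Ioi (0 : ℝ) =>
    (volume (Metric.ball x (R : ℝ)))⁻¹ * ∫⁻ y in Metric.ball x (R : ℝ), f y) ⟨R, hR⟩

lemma HLmax_le {f : E → ℝ≥0∞} {x : E} {B : ℝ≥0∞}
    (h : ∀ R : ℝ, 0 < R → (volume (Metric.ball x R))⁻¹ * ∫⁻ y in Metric.ball x R, f y ≤ B) :
    HLmax f x ≤ B :=
  iSup_le fun R => h R R.2

lemma lowerSemicontinuous_setLIntegral_ball (f : E → ℝ≥0∞) (R : ℝ) :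
    LowerSemicontinuous fun x : E => ∫⁻ y in Metric.ball x R, f y := by
  intro x t ht
  have hU : Metric.ball x R = ⋃ k : ℕ, Metric.ball x (R - 1 / ((k : ℝ) + 1)) := by
    ext y
    simp only [Metric.mem_ball, Set.mem_iUnion]
    constructor
    · intro h
      obtain ⟨k, hk⟩ := exists_nat_one_div_lt (sub_pos.2 h)
      exact ⟨k, by linarith⟩
    · rintro ⟨k, hk⟩
      have : (0 : ℝ) < 1 / ((k : ℝ) + 1) := by positivity
      linarith
  have hmono : Monotone fun k : ℕ => Metric.ball x (R - 1 / ((k : ℝ) + 1)) := by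
    intro k l hkl
    exact Metric.ball_subset_ball (sub_le_sub_left (Nat.one_div_le_one_div hkl) R)
  simp only at ht
  rw [hU, setLIntegral_iUnion_of_directed _ hmono.directed_le, gt_iff_lt, lt_iSup_iff] at ht
  obtain ⟨k, hk⟩ := ht
  have hpos : (0 : ℝ) < 1 / ((k : ℝ) + 1) := by positivity
  filter_upwards [Metric.ball_mem_nhds x hpos] with y hy
  refine hk.trans_le (lintegral_mono_set (Metric.ball_subset_ball' ?_))
  rw [dist_comm]
  linarith [Metric.mem_ball.1 hy]

lemma measurable_HLmax (f : E → ℝ≥0∞) : Measurable (HLmax f) := by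
  refine (lowerSemicontinuous_iSup fun R : Set.Ioi (0 : ℝ) => ?_).measurable
  intro x t ht
  have hc : ∀ y : E, volume (Metric.ball y (R : ℝ)) = volume (Metric.ball (0 : E) (R : ℝ)) :=
    fun y => Measure.addHaar_ball_center _ y _
  simp only [hc] at ht ⊢
  have h0 : (volume (Metric.ball (0 : E) (R : ℝ)))⁻¹ ≠ 0 :=
    ENNReal.inv_ne_zero.2 measure_ball_lt_top.ne
  have h1 : (volume (Metric.ball (0 : E) (R : ℝ)))⁻¹ ≠ ∞ :=
    ENNReal.inv_ne_top.2 (Metric.measure_ball_pos _ _ R.2).ne'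
  have ht' : t / (volume (Metric.ball (0 : E) (R : ℝ)))⁻¹
      < ∫⁻ y in Metric.ball x (R : ℝ), f y := by
    rwa [ENNReal.div_lt_iff (Or.inl h0) (Or.inl h1), mul_comm]
  filter_upwards [lowerSemicontinuous_setLIntegral_ball f R x _ ht'] with y hy
  rwa [gt_iff_lt, ENNReal.div_lt_iff (Or.inl h0) (Or.inl h1), mul_comm] at hy

/-- The Vitali covering argument for balls of bounded radius. -/
lemma volume_le_of_forall_exists_ball (f : E → ℝ≥0∞) (t : ℝ≥0∞) (K : ℝ) (s : Set E)
    (hs : ∀ x ∈ s, ∃ R, 0 < R ∧ R ≤ K ∧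
      t * volume (Metric.ball x R) ≤ ∫⁻ y in Metric.ball x R, f y) :
    t * volume s ≤ 5 ^ n * ∫⁻ y, f y := by
  choose! r hr0 hrK hrt using hs
  obtain ⟨u, hus, hdisj, hcov⟩ :=
    Vitali.exists_disjoint_subfamily_covering_enlargement_closedBall s id r K hrK 5 (by norm_num)
  have hcount : u.Countable := by
    refine hdisj.countable_of_nonempty_interior fun x hx => ?_
    exact ⟨x, Metric.ball_subset_interior_closedBall (Metric.mem_ball_self (hr0 x (hus hx)))⟩
  have hsub : s ⊆ ⋃ x ∈ u, Metric.closedBall x (5 * r x) := by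
    intro x hx
    obtain ⟨b, hb, hxb⟩ := hcov x hx
    exact Set.mem_iUnion₂.2 ⟨b, hb, hxb (Metric.mem_closedBall_self (hr0 x hx).le)⟩
  have hvol : ∀ x ∈ u, volume (Metric.closedBall x (5 * r x))
      = 5 ^ n * volume (Metric.ball x (r x)) := by
    intro x hx
    have h0 := hr0 x (hus hx)
    rw [Measure.addHaar_closedBall _ _ (by positivity), Measure.addHaar_ball_of_pos _ _ h0,
      finrank_euclideanSpace_fin, mul_pow, ENNReal.ofReal_mul (by positivity), mul_assoc,
      ENNReal.ofReal_pow (by positivity)]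
    norm_num
  have := hcount.to_subtype
  calc t * volume s
      ≤ t * ∑' x : u, volume (Metric.closedBall (x : E) (5 * r x)) := by
        gcongr
        refine (measure_mono hsub).trans ?_
        exact measure_biUnion_le _ hcount _
    _ = ∑' x : u, 5 ^ n * (t * volume (Metric.ball (x : E) (r x))) := by
        rw [← ENNReal.tsum_mul_left]
        refine tsum_congr fun x => ?_
        rw [hvol x x.2]
        ring
    _ ≤ ∑' x : u, 5 ^ n * ∫⁻ y in Metric.ball (x : E) (r x), f y := by
        gcongr with x
        exact hrt x (hus x.2)
    _ = 5 ^ n * ∫⁻ y in ⋃ x ∈ u, Metric.ball x (r x), f y := by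
        rw [ENNReal.tsum_mul_left, lintegral_biUnion hcount (fun x _ => measurableSet_ball)]
        exact hdisj.mono fun x => Metric.ball_subset_closedBall
    _ ≤ 5 ^ n * ∫⁻ y, f y := by
        gcongr
        exact Measure.restrict_le_self

/-- The weak type `(1,1)` inequality. -/
lemma mul_volume_lt_HLmax_le (f : E → ℝ≥0∞) (t : ℝ≥0∞) :
    t * volume {x | t < HLmax f x} ≤ 5 ^ n * ∫⁻ y, f y := by
  let A : ℕ → Set E := fun k => {x | ∃ R, 0 < R ∧ R ≤ (k : ℝ) ∧
      t * volume (Metric.ball x R) ≤ ∫⁻ y in Metric.ball x R, f y}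
  have hA : Monotone A := by
    rintro k l hkl x ⟨R, h0, hk, h⟩
    exact ⟨R, h0, hk.trans (by exact_mod_cast hkl), h⟩
  have hsub : {x | t < HLmax f x} ⊆ ⋃ k, A k := by
    intro x hx
    obtain ⟨⟨R, hR⟩, h⟩ := lt_iSup_iff.1 (show t < ⨆ R : Set.Ioi (0 : ℝ), _ from hx)
    obtain ⟨k, hk⟩ := exists_nat_ge R
    refine Set.mem_iUnion.2 ⟨k, R, hR, hk, ?_⟩
    rw [← ENNReal.le_div_iff_mul_le (Or.inl (Metric.measure_ball_pos _ _ hR).ne')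
      (Or.inl measure_ball_lt_top.ne), ENNReal.div_eq_inv_mul]
    exact h.le
  calc t * volume {x | t < HLmax f x} ≤ t * volume (⋃ k, A k) := by gcongr
    _ = ⨆ k, t * volume (A k) := by rw [hA.measure_iUnion, ENNReal.mul_iSup]
    _ ≤ _ := iSup_le fun k => volume_le_of_forall_exists_ball f t k (A k) fun x hx => hx

/-- The layer cake formula for a single value. -/
lemma lintegral_ite_lt_eq_rpow {q : ℝ} (hq : 0 < q) (a : ℝ≥0∞) :
    ∫⁻ t in Set.Ioi (0 : ℝ), (if ENNReal.ofReal t < a then ENNReal.ofReal (q * t ^ (q - 1)) else 0)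
      = a ^ q := by
  have hfin : ∀ b : ℝ≥0, ∫⁻ t in Set.Ioi (0 : ℝ),
      (if ENNReal.ofReal t < b then ENNReal.ofReal (q * t ^ (q - 1)) else 0)
        = (b : ℝ≥0∞) ^ q := by
    intro b
    have h := lintegral_rpow_eq_lintegral_meas_lt_mul (Measure.dirac ()) (f := fun _ => (b : ℝ))
      (Filter.Eventually.of_forall fun _ => b.2) aemeasurable_const hq
    rw [lintegral_dirac, ← ENNReal.ofReal_rpow_of_nonneg (NNReal.coe_nonneg b) hq.le,
      ENNReal.ofReal_coe_nnreal,
      ← lintegral_const_mul' _ _ ENNReal.ofReal_ne_top] at h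
    rw [h]
    refine setLIntegral_congr_fun measurableSet_Ioi fun t ht => ?_
    have ht0 : (0 : ℝ) < t := ht
    by_cases hb : t < b
    · have : ENNReal.ofReal t < b := by
        rwa [← ENNReal.ofReal_coe_nnreal, ENNReal.ofReal_lt_ofReal_iff (ht0.trans hb)]
      simp [this, hb, ENNReal.ofReal_mul hq.le]
    · have : ¬ ENNReal.ofReal t < b := by
        rw [← ENNReal.ofReal_coe_nnreal]
        exact not_lt.2 (ENNReal.ofReal_le_ofReal (not_lt.1 hb))
      simp [this, hb]
  induction a with
  | coe b => exact hfin b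
  | top =>
    rw [ENNReal.top_rpow_of_pos hq]
    refine ENNReal.eq_top_of_forall_nnreal_le fun b => ?_
    have hb : (b : ℝ≥0∞) = ((b ^ (1 / q) : ℝ≥0) : ℝ≥0∞) ^ q := by
      rw [← ENNReal.coe_rpow_of_nonneg _ hq.le, ← NNReal.rpow_mul, one_div_mul_cancel hq.ne',
        NNReal.rpow_one]
    rw [hb, ← hfin]
    refine lintegral_mono fun t => ?_
    simp only [ENNReal.ofReal_lt_top, if_true]
    split_ifs <;> simp

/-- The weak type inequality applied to the part of `f` above `t / 2`. -/
lemma volume_lt_HLmax_le {f : E → ℝ≥0∞} (hf : Measurable f) {t : ℝ} (ht : 0 < t) :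
    volume {x | ENNReal.ofReal t < HLmax f x} ≤
      2 * 5 ^ n * ENNReal.ofReal t⁻¹ *
        ∫⁻ y, if ENNReal.ofReal t < 2 * f y then f y else 0 := by
  set F : E → ℝ≥0∞ := fun y => if ENNReal.ofReal t < 2 * f y then f y else 0
  have hhalf : ENNReal.ofReal t = ENNReal.ofReal (t / 2) + ENNReal.ofReal (t / 2) := by
    rw [← ENNReal.ofReal_add (by positivity) (by positivity), add_halves]
  have htwo : ENNReal.ofReal t = 2 * ENNReal.ofReal (t / 2) := by rw [hhalf, two_mul]
  have hle : ∀ y, f y ≤ F y + ENNReal.ofReal (t / 2) := by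
    intro y
    by_cases h : ENNReal.ofReal t < 2 * f y
    · simp [F, h]
    · rw [htwo, not_lt] at h
      refine le_add_left ?_
      exact (ENNReal.mul_le_mul_iff_right (by norm_num) (by norm_num)).1 h
  have hFm : Measurable F :=
    Measurable.ite (measurableSet_lt measurable_const (hf.const_mul 2)) hf measurable_const
  have hmax : ∀ x, HLmax f x ≤ HLmax F x + ENNReal.ofReal (t / 2) := by
    refine fun x => HLmax_le fun R hR => ?_
    calc (volume (Metric.ball x R))⁻¹ * ∫⁻ y in Metric.ball x R, f y
        ≤ (volume (Metric.ball x R))⁻¹ *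
            ∫⁻ y in Metric.ball x R, (F y + ENNReal.ofReal (t / 2)) := by
          gcongr with y
          exact hle y
      _ = (volume (Metric.ball x R))⁻¹ * (∫⁻ y in Metric.ball x R, F y)
            + ENNReal.ofReal (t / 2) := by
          rw [lintegral_add_left hFm, setLIntegral_const, mul_add, mul_comm (ENNReal.ofReal _),
            ← mul_assoc (volume _)⁻¹ (volume _),
            ENNReal.inv_mul_cancel (Metric.measure_ball_pos _ _ hR).ne' measure_ball_lt_top.ne,
            one_mul]
      _ ≤ _ := by
          gcongr
          exact le_HLmax F x hR
  have hsub : {x | ENNReal.ofReal t < HLmax f x} ⊆ {x | ENNReal.ofReal (t / 2) < HLmax F x} := by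
    intro x hx
    have h1 := (show ENNReal.ofReal t < HLmax f x from hx).trans_le (hmax x)
    rw [hhalf] at h1
    exact lt_of_add_lt_add_right h1
  have hweak := mul_volume_lt_HLmax_le F (ENNReal.ofReal (t / 2))
  have hinv : 2 * ENNReal.ofReal t⁻¹ * ENNReal.ofReal (t / 2) = 1 := by
    rw [mul_right_comm, ← htwo, ← ENNReal.ofReal_mul ht.le, mul_inv_cancel₀ ht.ne',
      ENNReal.ofReal_one]
  calc volume {x | ENNReal.ofReal t < HLmax f x}
      ≤ volume {x | ENNReal.ofReal (t / 2) < HLmax F x} := measure_mono hsub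
    _ = 2 * ENNReal.ofReal t⁻¹ *
          (ENNReal.ofReal (t / 2) * volume {x | ENNReal.ofReal (t / 2) < HLmax F x}) := by
        rw [← mul_assoc, hinv, one_mul]
    _ ≤ 2 * ENNReal.ofReal t⁻¹ * (5 ^ n * ∫⁻ y, F y) := by gcongr
    _ = _ := by ring

/-- The strong type `(q,q)` inequality for `1 < q < ∞`. -/
lemma lintegral_HLmax_rpow_le {f : E → ℝ≥0∞} (hf : Measurable f) {q : ℝ} (hq : 1 < q) :
    ∫⁻ x, HLmax f x ^ q ≤
      2 * 5 ^ n * ENNReal.ofReal (q / (q - 1)) * 2 ^ (q - 1) * ∫⁻ x, f x ^ q := by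
  have hq0 : 0 < q := by linarith
  have hq1 : 0 < q - 1 := by linarith
  have hMm := measurable_HLmax f
  have hm : ∀ (r : ℝ) (F : E → ℝ≥0∞), Measurable F → Measurable (Function.uncurry
      fun (x : E) (t : ℝ) =>
        if ENNReal.ofReal t < F x then ENNReal.ofReal (r * t ^ (r - 1)) else 0) := by
    intro r F hF
    refine Measurable.ite (measurableSet_lt ?_ ?_) ?_ measurable_const <;> fun_prop
  have hpt : ∀ t : ℝ, 0 < t → ENNReal.ofReal (q * t ^ (q - 1)) *
      (2 * 5 ^ n * ENNReal.ofReal t⁻¹) = 2 * 5 ^ n * ENNReal.ofReal (q / (q - 1)) *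
        ENNReal.ofReal ((q - 1) * t ^ (q - 1 - 1)) := by
    intro t ht
    have : q * t ^ (q - 1) * t⁻¹ = q / (q - 1) * ((q - 1) * t ^ (q - 1 - 1)) := by
      rw [Real.rpow_sub_one ht.ne' (q - 1)]
      field_simp
    rw [mul_left_comm, mul_assoc (2 * 5 ^ n), ← ENNReal.ofReal_mul (by positivity),
      ← ENNReal.ofReal_mul (by positivity), this]
  calc ∫⁻ x, HLmax f x ^ q
      = ∫⁻ x, ∫⁻ t in Set.Ioi (0 : ℝ), (if ENNReal.ofReal t < HLmax f x then
          ENNReal.ofReal (q * t ^ (q - 1)) else 0) := by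
        simp_rw [lintegral_ite_lt_eq_rpow hq0]
    _ = ∫⁻ t in Set.Ioi (0 : ℝ), ∫⁻ x, (if ENNReal.ofReal t < HLmax f x then
          ENNReal.ofReal (q * t ^ (q - 1)) else 0) :=
        lintegral_lintegral_swap (hm q _ hMm).aemeasurable
    _ = ∫⁻ t in Set.Ioi (0 : ℝ), ENNReal.ofReal (q * t ^ (q - 1)) *
          volume {x | ENNReal.ofReal t < HLmax f x} := by
        refine lintegral_congr fun t => ?_
        rw [← lintegral_indicator_const (measurableSet_lt measurable_const hMm)]
        refine lintegral_congr fun x => ?_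
        simp [Set.indicator_apply]
    _ ≤ ∫⁻ t in Set.Ioi (0 : ℝ), 2 * 5 ^ n * ENNReal.ofReal (q / (q - 1)) *
          ∫⁻ y, f y * (if ENNReal.ofReal t < 2 * f y then
            ENNReal.ofReal ((q - 1) * t ^ (q - 1 - 1)) else 0) := by
        refine setLIntegral_mono' measurableSet_Ioi fun t ht => ?_
        refine (mul_le_mul_right (volume_lt_HLmax_le hf ht) _).trans_eq ?_
        rw [← mul_assoc, hpt t ht, mul_assoc, ← lintegral_const_mul' _ _ ENNReal.ofReal_ne_top]
        congr 1
        refine lintegral_congr fun y => ?_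
        split_ifs <;> simp [mul_comm]
    _ = 2 * 5 ^ n * ENNReal.ofReal (q / (q - 1)) * ∫⁻ y, ∫⁻ t in Set.Ioi (0 : ℝ),
          f y * (if ENNReal.ofReal t < 2 * f y then
            ENNReal.ofReal ((q - 1) * t ^ (q - 1 - 1)) else 0) := by
        rw [lintegral_const_mul' _ _ (by finiteness)]
        congr 1
        refine (lintegral_lintegral_swap ?_).symm
        exact ((hf.comp measurable_fst).mul (hm (q - 1) _ (hf.const_mul 2))).aemeasurable
    _ = 2 * 5 ^ n * ENNReal.ofReal (q / (q - 1)) * ∫⁻ y, 2 ^ (q - 1) * f y ^ q := by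
        congr 1
        refine lintegral_congr fun y => ?_
        have hmy : Measurable fun t : ℝ => if ENNReal.ofReal t < 2 * f y then
            ENNReal.ofReal ((q - 1) * t ^ (q - 1 - 1)) else 0 :=
          (hm (q - 1) _ (hf.const_mul 2)).comp measurable_prodMk_left
        rw [lintegral_const_mul _ hmy, lintegral_ite_lt_eq_rpow hq1,
          ENNReal.mul_rpow_of_nonneg _ _ hq1.le, mul_left_comm]
        congr 1
        nth_rewrite 1 [← ENNReal.rpow_one (f y)]
        rw [← ENNReal.rpow_add_of_nonneg _ _ zero_le_one hq1.le, add_sub_cancel]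
    _ = _ := by
        rw [lintegral_const_mul' _ _ (by finiteness), mul_assoc (2 * 5 ^ n * _)]

end Maximal

/-! ### Dyadic cubes and Morrey norms -/

section Dyadic

variable {n : ℕ}

local notation "E" => EuclideanSpace ℝ (Fin n)

lemma dyadicCube_eq_preimage (J : ℤ) (v : Fin n → ℤ) :
    dyadicCube n J v = WithLp.ofLp ⁻¹' (Set.univ.pi fun i =>
      Set.Ioo ((2 : ℝ) ^ (-J) * (v i : ℝ)) ((2 : ℝ) ^ (-J) * ((v i : ℝ) + 1))) := by
  ext x
  simp [dyadicCube]

lemma measurableSet_dyadicCube (J : ℤ) (v : Fin n → ℤ) : MeasurableSet (dyadicCube n J v) := by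
  rw [dyadicCube_eq_preimage]
  exact (PiLp.volume_preserving_ofLp (Fin n)).measurable
    (MeasurableSet.univ_pi fun _ => measurableSet_Ioo)

lemma ofReal_two_rpow (r : ℝ) : ENNReal.ofReal ((2 : ℝ) ^ r) = (2 : ℝ≥0∞) ^ r := by
  rw [← ENNReal.ofReal_rpow_of_pos two_pos, ENNReal.ofReal_ofNat]

lemma ofReal_two_zpow_pow (K : ℤ) : ENNReal.ofReal ((2 : ℝ) ^ K) ^ n
    = (2 : ℝ≥0∞) ^ ((n : ℝ) * (K : ℝ)) := by
  rw [← Real.rpow_intCast, ofReal_two_rpow, ← ENNReal.rpow_natCast, ← ENNReal.rpow_mul, mul_comm]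

lemma two_rpow_add (a b : ℝ) : (2 : ℝ≥0∞) ^ (a + b) = 2 ^ a * 2 ^ b :=
  ENNReal.rpow_add _ _ (by norm_num) (by norm_num)

lemma volume_dyadicCube (J : ℤ) (v : Fin n → ℤ) :
    volume (dyadicCube n J v) = (2 : ℝ≥0∞) ^ (-((n : ℝ) * (J : ℝ))) := by
  rw [dyadicCube_eq_preimage, (PiLp.volume_preserving_ofLp (Fin n)).measure_preimage
    (MeasurableSet.univ_pi fun _ => measurableSet_Ioo).nullMeasurableSet, Real.volume_pi_Ioo]
  have h : ∀ i, (2 : ℝ) ^ (-J) * ((v i : ℝ) + 1) - (2 : ℝ) ^ (-J) * (v i : ℝ) = (2 : ℝ) ^ (-J) :=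
    fun i => by ring
  simp_rw [h]
  rw [Finset.prod_const, Finset.card_univ, Fintype.card_fin, ofReal_two_zpow_pow]
  push_cast
  ring_nf

lemma ae_forall_coord_ne : ∀ᵐ x : E, ∀ (J : ℤ) (i : Fin n) (m : ℤ),
    x i ≠ (2 : ℝ) ^ (-J) * (m : ℝ) := by
  simp_rw [ae_all_iff]
  intro J i m
  have h : ∀ᵐ y : Fin n → ℝ, y i ≠ (2 : ℝ) ^ (-J) * (m : ℝ) := by
    rw [ae_iff]
    simpa [volume_pi] using
      Measure.pi_hyperplane (fun _ : Fin n => (volume : Measure ℝ)) i ((2 : ℝ) ^ (-J) * (m : ℝ))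
  exact (PiLp.volume_preserving_ofLp (Fin n)).quasiMeasurePreserving.ae h

/-- The indices of the cubes that touch the cube with index `v`, at the same scale. -/
noncomputable def neighborIndices (v : Fin n → ℤ) : Finset (Fin n → ℤ) :=
  Fintype.piFinset fun i => Finset.Icc (v i - 1) (v i + 1)

lemma card_neighborIndices (v : Fin n → ℤ) : (neighborIndices v).card = 3 ^ n := by
  have h : ∀ i, v i + 1 + 1 - (v i - 1) = 3 := fun i => by ring
  simp [neighborIndices, Fintype.card_piFinset, Int.card_Icc, h]

lemma exists_index (J : ℤ) (x : E) : ∃ v : Fin n → ℤ, ∀ i,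
    (2 : ℝ) ^ (-J) * (v i : ℝ) ≤ x i ∧ x i < (2 : ℝ) ^ (-J) * ((v i : ℝ) + 1) := by
  have ha : (0 : ℝ) < 2 ^ (-J) := by positivity
  refine ⟨fun i => ⌊x i / 2 ^ (-J)⌋, fun i => ⟨?_, ?_⟩⟩
  · rw [mul_comm, ← le_div_iff₀ ha]
    exact Int.floor_le _
  · rw [mul_comm, ← div_lt_iff₀ ha]
    exact Int.lt_floor_add_one _

lemma ball_ae_le_iUnion_neighbors {J : ℤ} {v : Fin n → ℤ} {x : E}
    (hx : ∀ i, (2 : ℝ) ^ (-J) * (v i : ℝ) ≤ x i ∧ x i < (2 : ℝ) ^ (-J) * ((v i : ℝ) + 1))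
    {R : ℝ} (hR : R ≤ (2 : ℝ) ^ (-J)) :
    Metric.ball x R ≤ᵐ[volume] ⋃ w ∈ neighborIndices v, dyadicCube n J w := by
  filter_upwards [ae_forall_coord_ne (n := n)] with y hne hy
  have ha : (0 : ℝ) < 2 ^ (-J) := by positivity
  obtain ⟨w, hw⟩ := exists_index J y
  refine Set.mem_iUnion₂.2 ⟨w, ?_, fun i => ⟨(hw i).1.lt_of_ne (hne J i (w i)).symm, (hw i).2⟩⟩
  simp only [neighborIndices, Fintype.mem_piFinset, Finset.mem_Icc]
  intro i
  have hd : |y i - x i| < (2 : ℝ) ^ (-J) := by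
    refine lt_of_le_of_lt ?_ ((Metric.mem_ball.1 hy).trans_le hR)
    rw [dist_eq_norm]
    exact PiLp.norm_apply_le (y - x) i
  obtain ⟨h1, h2⟩ := abs_lt.1 hd
  obtain ⟨h3, h4⟩ := hx i
  obtain ⟨h5, h6⟩ := hw i
  have h7 : (2 : ℝ) ^ (-J) * ((v i : ℝ) - 1) < 2 ^ (-J) * ((w i : ℝ) + 1) := by
    rw [mul_sub, mul_one]
    linarith
  have h8 : (2 : ℝ) ^ (-J) * (w i : ℝ) < 2 ^ (-J) * ((v i : ℝ) + 2) := by linarith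
  have h9 : v i - 1 < w i + 1 := by exact_mod_cast lt_of_mul_lt_mul_left h7 ha.le
  have h10 : w i < v i + 2 := by exact_mod_cast lt_of_mul_lt_mul_left h8 ha.le
  constructor <;> omega

lemma setLIntegral_iUnion_neighbors_le (h : E → ℝ≥0∞) (J : ℤ) (v : Fin n → ℤ) {B : ℝ≥0∞}
    (hB : ∀ w, ∫⁻ y in dyadicCube n J w, h y ≤ B) :
    ∫⁻ y in ⋃ w ∈ neighborIndices v, dyadicCube n J w, h y ≤ 3 ^ n * B := by
  calc ∫⁻ y in ⋃ w ∈ neighborIndices v, dyadicCube n J w, h y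
      = ∫⁻ y in ⋃ w : neighborIndices v, dyadicCube n J w, h y := by
        rw [Set.iUnion_subtype]
    _ ≤ ∑' w : neighborIndices v, ∫⁻ y in dyadicCube n J w, h y := lintegral_iUnion_le _ _
    _ ≤ ∑' _ : neighborIndices v, B := by
        gcongr with w
        exact hB w
    _ = 3 ^ n * B := by
        rw [tsum_fintype, Finset.sum_const, Finset.card_univ, Fintype.card_coe,
          card_neighborIndices, nsmul_eq_mul]
        push_cast
        rfl

lemma LpOn_eq_eLpNorm {p : ℝ≥0∞} (hp : p ≠ 0) (F : E → ℝ≥0∞) (s : Set E) :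
    LpOn p F s = eLpNorm F p (volume.restrict s) := by
  by_cases h : p = ∞
  · subst h
    simp [LpOn, eLpNorm_exponent_top, eLpNormEssSup]
  · simp [LpOn, h, eLpNorm_eq_lintegral_rpow_enorm_toReal hp h]

lemma LpOn_le_of_forall_le {p : ℝ≥0∞} (hp : p ≠ 0) {F : E → ℝ≥0∞} {B : ℝ≥0∞}
    (h : ∀ x, F x ≤ B) (s : Set E) :
    LpOn p F s ≤ B * volume s ^ (1 / p.toReal) := by
  rw [LpOn_eq_eLpNorm hp]
  calc eLpNorm F p (volume.restrict s) ≤ eLpNorm (fun _ : E => B) p (volume.restrict s) :=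
        eLpNorm_mono_enorm h
    _ ≤ B * volume s ^ (1 / p.toReal) := by
        rcases eq_or_ne p ∞ with rfl | hp'
        · rw [eLpNorm_exponent_top]
          have h := essSup_le_of_ae_le (μ := volume.restrict s) (f := fun _ : E => B) B
            (Filter.Eventually.of_forall fun _ => le_rfl)
          simpa [eLpNormEssSup] using h
        · rw [eLpNorm_const' _ hp hp']
          simp

lemma LpOn_dyadicCube_le (p : ℝ≥0∞) (τ : ℝ) (F : E → ℝ≥0∞) (J : ℤ) (v : Fin n → ℤ) :
    LpOn p F (dyadicCube n J v)
      ≤ (2 : ℝ≥0∞) ^ (-((n : ℝ) * (J : ℝ) * τ)) * morreyNormE n p τ F := by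
  have h : ENNReal.ofReal ((2 : ℝ) ^ ((n : ℝ) * (J : ℝ) * τ)) * LpOn p F (dyadicCube n J v)
      ≤ morreyNormE n p τ F :=
    le_iSup₂ (f := fun (J : ℤ) (v : Fin n → ℤ) =>
      ENNReal.ofReal ((2 : ℝ) ^ ((n : ℝ) * (J : ℝ) * τ)) * LpOn p F (dyadicCube n J v)) J v
  rw [ofReal_two_rpow] at h
  refine le_trans (le_of_eq ?_) (mul_le_mul_right h _)
  rw [← mul_assoc, ← two_rpow_add, neg_add_cancel, ENNReal.rpow_zero, one_mul]

lemma morreyNormE_le {p : ℝ≥0∞} {τ : ℝ} {F : E → ℝ≥0∞} {B : ℝ≥0∞}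
    (h : ∀ J v, LpOn p F (dyadicCube n J v) ≤ (2 : ℝ≥0∞) ^ (-((n : ℝ) * (J : ℝ) * τ)) * B) :
    morreyNormE n p τ F ≤ B := by
  refine iSup₂_le fun J v => ?_
  rw [ofReal_two_rpow]
  refine (mul_le_mul_right (h J v) _).trans_eq ?_
  rw [← mul_assoc, ← two_rpow_add, add_neg_cancel, ENNReal.rpow_zero, one_mul]

/-- Hölder's inequality on a set of finite measure. -/
lemma setLIntegral_rpow_le_LpOn {γ : ℝ} (hγ : 0 < γ) {p : ℝ≥0∞} (hγp : ENNReal.ofReal γ ≤ p)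
    {G : E → ℝ≥0∞} (hG : Measurable G) (s : Set E) :
    ∫⁻ y in s, G y ^ γ ≤ (LpOn p G s * volume s ^ (1 / γ - 1 / p.toReal)) ^ γ := by
  have hγ0 : ENNReal.ofReal γ ≠ 0 := (ENNReal.ofReal_pos.2 hγ).ne'
  have h := eLpNorm_le_eLpNorm_mul_rpow_measure_univ (μ := volume.restrict s) hγp
    hG.aestronglyMeasurable
  rw [eLpNorm_eq_lintegral_rpow_enorm_toReal hγ0 ENNReal.ofReal_ne_top,
    ENNReal.toReal_ofReal hγ.le, Measure.restrict_apply_univ,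
    ← LpOn_eq_eLpNorm ((pos_iff_ne_zero.2 hγ0).trans_le hγp).ne', ← ENNReal.rpow_le_rpow_iff hγ,
    ← ENNReal.rpow_mul, one_div_mul_cancel hγ.ne', ENNReal.rpow_one] at h
  simpa using h

lemma setLIntegral_dyadicCube_rpow_le {γ : ℝ} (hγ : 0 < γ) {p : ℝ≥0∞}
    (hγp : ENNReal.ofReal γ ≤ p) (τ : ℝ) {G : E → ℝ≥0∞} (hG : Measurable G) (J : ℤ)
    (v : Fin n → ℤ) :
    ∫⁻ y in dyadicCube n J v, G y ^ γ ≤ (2 : ℝ≥0∞) ^ (-((n : ℝ) * (J : ℝ))) *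
      ((2 : ℝ≥0∞) ^ ((n : ℝ) * (1 / p.toReal - τ) * (J : ℝ)) * morreyNormE n p τ G) ^ γ := by
  refine (setLIntegral_rpow_le_LpOn hγ hγp hG _).trans ?_
  calc (LpOn p G (dyadicCube n J v) * volume (dyadicCube n J v) ^ (1 / γ - 1 / p.toReal)) ^ γ
      ≤ ((2 : ℝ≥0∞) ^ (-((n : ℝ) * (J : ℝ) * τ)) * morreyNormE n p τ G *
          ((2 : ℝ≥0∞) ^ (-((n : ℝ) * (J : ℝ)))) ^ (1 / γ - 1 / p.toReal)) ^ γ := by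
        rw [volume_dyadicCube]
        gcongr
        exact LpOn_dyadicCube_le p τ G J v
    _ = ((2 : ℝ≥0∞) ^ (-((n : ℝ) * (J : ℝ)) * (1 / γ)) *
          ((2 : ℝ≥0∞) ^ ((n : ℝ) * (1 / p.toReal - τ) * (J : ℝ)) * morreyNormE n p τ G)) ^ γ := by
        rw [← ENNReal.rpow_mul, mul_right_comm, ← two_rpow_add, ← mul_assoc, ← two_rpow_add]
        ring_nf
    _ = _ := by
        rw [ENNReal.mul_rpow_of_nonneg _ _ hγ.le, ← ENNReal.rpow_mul, mul_assoc (-_),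
          one_div_mul_cancel hγ.ne', mul_one]

/-- The constant in the estimate of averages over balls by the Morrey norm. -/
noncomputable def ballAverageConst (n : ℕ) : ℝ≥0∞ :=
  (volume (Metric.ball (0 : EuclideanSpace ℝ (Fin n)) 1))⁻¹ * 2 ^ n * 3 ^ n

lemma ballAverageConst_ne_top : ballAverageConst n ≠ ∞ := by
  have : (volume (Metric.ball (0 : E) 1))⁻¹ ≠ ∞ :=
    ENNReal.inv_ne_top.2 (Metric.measure_ball_pos _ _ one_pos).ne'
  unfold ballAverageConst
  finiteness

lemma ball_average_rpow_le {γ : ℝ} (hγ : 0 < γ) {p : ℝ≥0∞}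
    (hγp : ENNReal.ofReal γ ≤ p) (τ : ℝ) {G : E → ℝ≥0∞} (hG : Measurable G) (x : E)
    {K : ℤ} {R : ℝ} (hR : R ∈ Set.Ioc ((2 : ℝ) ^ (-K - 1)) ((2 : ℝ) ^ (-K))) :
    (volume (Metric.ball x R))⁻¹ * ∫⁻ y in Metric.ball x R, G y ^ γ ≤ ballAverageConst n *
      ((2 : ℝ≥0∞) ^ ((n : ℝ) * (1 / p.toReal - τ) * (K : ℝ)) * morreyNormE n p τ G) ^ γ := by
  obtain ⟨v, hv⟩ := exists_index K x
  set X := ((2 : ℝ≥0∞) ^ ((n : ℝ) * (1 / p.toReal - τ) * (K : ℝ)) * morreyNormE n p τ G) ^ γ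
  have hvol : (volume (Metric.ball x R))⁻¹
      ≤ (volume (Metric.ball (0 : E) 1))⁻¹ * 2 ^ n * (2 : ℝ≥0∞) ^ ((n : ℝ) * (K : ℝ)) := by
    have hpos : (0 : ℝ) < 2 ^ (-K - 1) := by positivity
    calc (volume (Metric.ball x R))⁻¹ ≤ (volume (Metric.ball x ((2 : ℝ) ^ (-K - 1))))⁻¹ :=
          ENNReal.inv_le_inv.2 (measure_mono (Metric.ball_subset_ball hR.1.le))
      _ = ((2 : ℝ≥0∞) ^ (-((n : ℝ) * (K : ℝ) + n)) * volume (Metric.ball (0 : E) 1))⁻¹ := by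
          rw [Measure.addHaar_ball_of_pos _ _ hpos, finrank_euclideanSpace_fin,
            ENNReal.ofReal_pow hpos.le, ofReal_two_zpow_pow]
          push_cast
          ring_nf
      _ = _ := by
          rw [ENNReal.mul_inv (Or.inr measure_ball_lt_top.ne)
            (Or.inr (Metric.measure_ball_pos _ _ one_pos).ne'), ENNReal.rpow_neg, inv_inv,
            two_rpow_add, ENNReal.rpow_natCast]
          ring
  have hint : ∫⁻ y in Metric.ball x R, G y ^ γ
      ≤ 3 ^ n * ((2 : ℝ≥0∞) ^ (-((n : ℝ) * (K : ℝ))) * X) :=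
    (lintegral_mono_set' (ball_ae_le_iUnion_neighbors hv hR.2)).trans
      (setLIntegral_iUnion_neighbors_le _ K v
        fun w => setLIntegral_dyadicCube_rpow_le hγ hγp τ hG K w)
  calc _ ≤ (volume (Metric.ball (0 : E) 1))⁻¹ * 2 ^ n * (2 : ℝ≥0∞) ^ ((n : ℝ) * (K : ℝ)) *
        (3 ^ n * ((2 : ℝ≥0∞) ^ (-((n : ℝ) * (K : ℝ))) * X)) := mul_le_mul' hvol hint
    _ = ballAverageConst n * X *
        ((2 : ℝ≥0∞) ^ ((n : ℝ) * (K : ℝ)) * (2 : ℝ≥0∞) ^ (-((n : ℝ) * (K : ℝ)))) := by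
        unfold ballAverageConst
        ring
    _ = ballAverageConst n * X := by
        rw [← two_rpow_add, add_neg_cancel, ENNReal.rpow_zero, mul_one]

lemma exists_mem_Ioc_two_zpow_neg {R : ℝ} (hR : 0 < R) :
    ∃ K : ℤ, R ∈ Set.Ioc ((2 : ℝ) ^ (-K - 1)) ((2 : ℝ) ^ (-K)) := by
  obtain ⟨m, hm⟩ := exists_mem_Ioc_zpow hR one_lt_two
  refine ⟨-(m + 1), ?_⟩
  simpa using hm

end Dyadic

/-! ### Boundedness on Morrey spaces -/

section Morrey

variable {n : ℕ}

local notation "E" => EuclideanSpace ℝ (Fin n)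

/-- A supercritical Morrey space (`τ > 1/p`, `n > 0`) contains only the zero function. -/
lemma lintegral_rpow_eq_zero_of_supercritical {γ : ℝ} (hγ : 0 < γ) {p : ℝ≥0∞}
    (hγp : ENNReal.ofReal γ ≤ p) {τ : ℝ} (hτ : (n : ℝ) * (1 / p.toReal - τ) < 0)
    {G : E → ℝ≥0∞} (hG : Measurable G) (hN : morreyNormE n p τ G ≠ ∞) :
    ∫⁻ y, G y ^ γ = 0 := by
  set a := (n : ℝ) * (1 / p.toReal - τ)
  set N := morreyNormE n p τ G
  have htend : Filter.Tendsto (fun k : ℕ => ballAverageConst n *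
      ((2 : ℝ≥0∞) ^ (a * ((k : ℤ) : ℝ)) * N) ^ γ) Filter.atTop (nhds 0) := by
    have h1 : Filter.Tendsto (fun k : ℕ => (2 : ℝ≥0∞) ^ (a * ((k : ℤ) : ℝ))) Filter.atTop
        (nhds 0) := by
      have h2 : (2 : ℝ≥0∞) ^ a < 1 := ENNReal.rpow_lt_one_of_one_lt_of_neg (by norm_num) hτ
      refine (ENNReal.tendsto_pow_atTop_nhds_zero_of_lt_one h2).congr fun k => ?_
      rw [Int.cast_natCast, ENNReal.rpow_mul _ a, ENNReal.rpow_natCast]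
    have h3 := ENNReal.Tendsto.mul_const (b := N) h1 (Or.inr hN)
    have h4 := (ENNReal.continuous_rpow_const (y := γ)).continuousAt.tendsto.comp h3
    have h5 := ENNReal.Tendsto.const_mul (a := ballAverageConst n) h4
      (Or.inr ballAverageConst_ne_top)
    simpa [hγ] using h5
  set ρ : Measure E := volume.withDensity fun y => G y ^ γ
  have hle : ∀ (ε : ℝ≥0), 0 < ε → ∀ s : Set E, ρ s ≤ ε * volume s := by
    intro ε hε s
    refine (Besicovitch.vitaliFamily (volume : Measure E)).measure_le_of_frequently_le
      (ε • volume) (withDensity_absolutelyContinuous _ _) s fun x _ => ?_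
    have hr : Filter.Tendsto (fun k : ℕ => (2 : ℝ) ^ (-(k : ℤ))) Filter.atTop
        (nhdsWithin 0 (Set.Ioi 0)) := by
      refine tendsto_nhdsWithin_iff.2 ⟨?_, Filter.Eventually.of_forall fun k => ?_⟩
      · refine (tendsto_pow_atTop_nhds_zero_of_lt_one (r := (2 : ℝ)⁻¹) (by norm_num)
          (by norm_num)).congr fun k => ?_
        simp
      · exact Set.mem_Ioi.2 (by positivity)
    refine ((Besicovitch.tendsto_filterAt volume x).comp hr).frequently
      (Filter.Eventually.frequently ?_)
    have hε' : (0 : ℝ≥0∞) < ε := by exact_mod_cast hε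
    filter_upwards [htend.eventually_lt_const hε'] with k hk
    have hpos : (0 : ℝ) < 2 ^ (-(k : ℤ)) := by positivity
    have havg := ball_average_rpow_le hγ hγp τ hG x (K := k) (R := (2 : ℝ) ^ (-(k : ℤ)))
      ⟨zpow_lt_zpow_right₀ one_lt_two (by omega), le_rfl⟩
    have hball : ρ (Metric.ball x ((2 : ℝ) ^ (-(k : ℤ))))
        ≤ ε * volume (Metric.ball x ((2 : ℝ) ^ (-(k : ℤ)))) := by
      rw [withDensity_apply _ measurableSet_ball,
        ← ENNReal.div_le_iff (Metric.measure_ball_pos _ _ hpos).ne' measure_ball_lt_top.ne,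
        ENNReal.div_eq_inv_mul]
      exact havg.trans hk.le
    have hsphere : ρ (Metric.sphere x ((2 : ℝ) ^ (-(k : ℤ)))) = 0 :=
      withDensity_absolutelyContinuous _ _ (Measure.addHaar_sphere_of_ne_zero _ x hpos.ne')
    calc ρ (Metric.closedBall x ((2 : ℝ) ^ (-(k : ℤ))))
        ≤ ρ (Metric.ball x ((2 : ℝ) ^ (-(k : ℤ)))) + ρ (Metric.sphere x ((2 : ℝ) ^ (-(k : ℤ)))) := by
          rw [← Metric.ball_union_sphere]
          exact measure_union_le _ _
      _ ≤ ε * volume (Metric.closedBall x ((2 : ℝ) ^ (-(k : ℤ)))) := by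
          rw [hsphere, add_zero]
          refine hball.trans ?_
          gcongr
          exact Metric.ball_subset_closedBall
  have hzero : ∀ k : ℕ, ρ (Metric.ball (0 : E) k) = 0 := by
    intro k
    have hfin : volume (Metric.ball (0 : E) k) ≠ ∞ := measure_ball_lt_top.ne
    have hlim : Filter.Tendsto (fun m : ℕ => ((((m : ℝ≥0) + 1)⁻¹ : ℝ≥0) : ℝ≥0∞) *
        volume (Metric.ball (0 : E) k)) Filter.atTop (nhds 0) := by
      have h1 : Filter.Tendsto (fun m : ℕ => ((((m : ℝ≥0) + 1)⁻¹ : ℝ≥0) : ℝ≥0∞))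
          Filter.atTop (nhds 0) := by
        have := tendsto_one_div_add_atTop_nhds_zero_nat (𝕜 := ℝ≥0)
        simpa using ENNReal.tendsto_coe.2 this
      simpa using ENNReal.Tendsto.mul_const h1 (Or.inr hfin)
    exact le_antisymm (ge_of_tendsto' hlim fun m => hle _ (by positivity) _) zero_le
  have huniv : ρ Set.univ = 0 := by
    rw [← Metric.iUnion_ball_nat (0 : E)]
    exact measure_iUnion_null hzero
  rwa [withDensity_apply _ MeasurableSet.univ, Measure.restrict_univ] at huniv

/-- Balls centred in a dyadic cube are either contained in its neighbourhood or at least as large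
as the cube. -/
lemma HLmax_rpow_le_max {γ : ℝ} (hγ : 0 < γ) {p : ℝ≥0∞} (hγp : ENNReal.ofReal γ ≤ p) {τ : ℝ}
    (hτ : 0 ≤ (n : ℝ) * (1 / p.toReal - τ)) {G : E → ℝ≥0∞} (hG : Measurable G) {J : ℤ}
    {v : Fin n → ℤ} {x : E} (hx : x ∈ dyadicCube n J v) :
    HLmax (fun y => G y ^ γ) x ≤ max
      (HLmax ((⋃ w ∈ neighborIndices v, dyadicCube n J w).indicator fun y => G y ^ γ) x)
      (ballAverageConst n *
        ((2 : ℝ≥0∞) ^ ((n : ℝ) * (1 / p.toReal - τ) * (J : ℝ)) * morreyNormE n p τ G) ^ γ) := by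
  refine HLmax_le fun R hR => ?_
  rcases le_total R ((2 : ℝ) ^ (-J)) with hRJ | hRJ
  · refine le_max_of_le_left (le_trans ?_ (le_HLmax _ x hR))
    gcongr 1
    refine lintegral_mono_ae ?_
    have hsub := ball_ae_le_iUnion_neighbors (fun i => ⟨(hx i).1.le, (hx i).2⟩) hRJ
    filter_upwards [ae_restrict_of_ae hsub, ae_restrict_mem measurableSet_ball] with y hy hyb
    have hyS : y ∈ ⋃ w ∈ neighborIndices v, dyadicCube n J w := hy hyb
    rw [Set.indicator_of_mem hyS]
  · refine le_max_of_le_right ?_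
    obtain ⟨K, hK⟩ := exists_mem_Ioc_two_zpow_neg hR
    have hKJ : K ≤ J := by
      have := (zpow_le_zpow_iff_right₀ (one_lt_two (α := ℝ))).1 (hRJ.trans hK.2)
      omega
    refine (ball_average_rpow_le hγ hγp τ hG x hK).trans ?_
    gcongr
    norm_num

lemma LpOn_HLmax_le {γ : ℝ} (hγ : 0 < γ) {p : ℝ≥0∞} (hγp : ENNReal.ofReal γ < p) (hp : p ≠ ∞)
    {D : ℝ≥0∞} (hD : ∀ f : E → ℝ≥0∞, Measurable f →
      ∫⁻ x, HLmax f x ^ (p.toReal / γ) ≤ D * ∫⁻ x, f x ^ (p.toReal / γ))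
    {τ : ℝ} (hτ : 0 ≤ (n : ℝ) * (1 / p.toReal - τ)) {G : E → ℝ≥0∞} (hG : Measurable G)
    (J : ℤ) (v : Fin n → ℤ) :
    LpOn p (fun x => HLmax (fun y => G y ^ γ) x ^ (1 / γ)) (dyadicCube n J v) ≤
      (2 : ℝ≥0∞) ^ (-((n : ℝ) * (J : ℝ) * τ)) *
        ((D * 3 ^ n + ballAverageConst n ^ (p.toReal / γ)) ^ (1 / p.toReal) *
          morreyNormE n p τ G) := by
  have hP : 0 < p.toReal := ENNReal.toReal_pos (ne_bot_of_gt hγp) hp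
  have hq : 0 < p.toReal / γ := by positivity
  set P := p.toReal
  set q := P / γ
  set N := morreyNormE n p τ G
  set S := ⋃ w ∈ neighborIndices v, dyadicCube n J w
  set A := ballAverageConst n * ((2 : ℝ≥0∞) ^ ((n : ℝ) * (1 / P - τ) * (J : ℝ)) * N) ^ γ
  set B := ((2 : ℝ≥0∞) ^ (-((n : ℝ) * (J : ℝ) * τ)) * N) ^ P
  have hS : MeasurableSet S :=
    Finset.measurableSet_biUnion _ fun w _ => measurableSet_dyadicCube J w
  have hf : Measurable fun y => G y ^ γ := hG.pow_const γ
  have hloc : ∫⁻ x, S.indicator (fun y => G y ^ γ) x ^ q ≤ 3 ^ n * B := by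
    have : ∀ x, S.indicator (fun y => G y ^ γ) x ^ q = S.indicator (fun y => G y ^ P) x := by
      intro x
      by_cases hx : x ∈ S
      · rw [Set.indicator_of_mem hx, Set.indicator_of_mem hx, ← ENNReal.rpow_mul,
          mul_div_cancel₀ _ hγ.ne']
      · rw [Set.indicator_of_notMem hx, Set.indicator_of_notMem hx, ENNReal.zero_rpow_of_pos hq]
    simp_rw [this]
    rw [lintegral_indicator hS]
    refine setLIntegral_iUnion_neighbors_le _ J v fun w => ?_
    have h := ENNReal.rpow_le_rpow (LpOn_dyadicCube_le p τ G J w) hP.le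
    rwa [LpOn, if_neg hp, ← ENNReal.rpow_mul, one_div_mul_cancel hP.ne', ENNReal.rpow_one] at h
  have hfar : A ^ q * volume (dyadicCube n J v) = ballAverageConst n ^ q * B := by
    have h1 : (n : ℝ) * (1 / P - τ) * (J : ℝ) * P + -((n : ℝ) * (J : ℝ))
        = -((n : ℝ) * (J : ℝ) * τ) * P := by
      field_simp
      ring
    simp only [A, B]
    rw [volume_dyadicCube, ENNReal.mul_rpow_of_nonneg _ _ hq.le, ← ENNReal.rpow_mul _ γ q,
      mul_div_cancel₀ _ hγ.ne', ENNReal.mul_rpow_of_nonneg _ _ hP.le,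
      ENNReal.mul_rpow_of_nonneg _ _ hP.le, ← ENNReal.rpow_mul, ← ENNReal.rpow_mul, ← h1,
      two_rpow_add]
    ring
  have hmain : ∫⁻ x in dyadicCube n J v, (HLmax (fun y => G y ^ γ) x ^ (1 / γ)) ^ P
      ≤ (D * 3 ^ n + ballAverageConst n ^ q) * B := by
    calc ∫⁻ x in dyadicCube n J v, (HLmax (fun y => G y ^ γ) x ^ (1 / γ)) ^ P
        ≤ ∫⁻ x in dyadicCube n J v,
            (HLmax (S.indicator fun y => G y ^ γ) x ^ q + A ^ q) := by
          refine setLIntegral_mono' (measurableSet_dyadicCube J v) fun x hx => ?_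
          rw [← ENNReal.rpow_mul, one_div_mul_eq_div]
          refine (ENNReal.rpow_le_rpow (HLmax_rpow_le_max hγ hγp.le hτ hG hx) hq.le).trans ?_
          rw [(ENNReal.monotone_rpow_of_nonneg hq.le).map_max]
          exact max_le le_self_add le_add_self
      _ = (∫⁻ x in dyadicCube n J v, HLmax (S.indicator fun y => G y ^ γ) x ^ q)
            + A ^ q * volume (dyadicCube n J v) := by
          rw [lintegral_add_right _ measurable_const, setLIntegral_const]
      _ ≤ D * (3 ^ n * B) + ballAverageConst n ^ q * B := by
          rw [hfar]
          gcongr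
          exact (setLIntegral_le_lintegral _ _).trans
            ((hD _ (hf.indicator hS)).trans (by gcongr))
      _ = _ := by ring
  rw [LpOn, if_neg hp]
  refine (ENNReal.rpow_le_rpow hmain (by positivity)).trans_eq ?_
  rw [ENNReal.mul_rpow_of_nonneg _ _ (by positivity), ← ENNReal.rpow_mul,
    mul_one_div_cancel hP.ne', ENNReal.rpow_one]
  ring

lemma exists_morreyNormE_HLmax_le (n : ℕ) {γ : ℝ} (hγ : 0 < γ) {p : ℝ≥0∞}
    (hγp : ENNReal.ofReal γ < p) {τ : ℝ} (hτ0 : 0 ≤ τ) :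
    ∃ C : ℝ≥0∞, C ≠ ∞ ∧ ∀ G : EuclideanSpace ℝ (Fin n) → ℝ≥0∞, Measurable G →
      morreyNormE n p τ G ≠ ∞ →
        morreyNormE n p τ (fun x => HLmax (fun y => G y ^ γ) x ^ (1 / γ))
          ≤ C * morreyNormE n p τ G := by
  have hp0 : p ≠ 0 := ne_bot_of_gt hγp
  rcases lt_or_ge ((n : ℝ) * (1 / p.toReal - τ)) 0 with hτ | hτ
  · refine ⟨0, by simp, fun G hG hN => morreyNormE_le fun J v => ?_⟩
    have h0 := lintegral_rpow_eq_zero_of_supercritical hγ hγp.le hτ hG hN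
    have hmax : ∀ x, HLmax (fun y => G y ^ γ) x ^ (1 / γ) ≤ 0 := by
      intro x
      have : HLmax (fun y => G y ^ γ) x ≤ 0 := by
        refine HLmax_le fun R _ => ?_
        rw [le_antisymm ((setLIntegral_le_lintegral _ _).trans_eq h0) zero_le, mul_zero]
      rw [le_antisymm this zero_le, ENNReal.zero_rpow_of_pos (by positivity)]
    simpa using LpOn_le_of_forall_le hp0 hmax (dyadicCube n J v)
  rcases eq_or_ne p ∞ with rfl | hp
  · refine ⟨ballAverageConst n ^ (1 / γ),
      ENNReal.rpow_ne_top_of_nonneg (by positivity) ballAverageConst_ne_top,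
      fun G hG _ => morreyNormE_le fun J v => ?_⟩
    have hnτ : (n : ℝ) * τ = 0 := by
      refine le_antisymm ?_ (by positivity)
      simpa using hτ
    have hmax : ∀ x, HLmax (fun y => G y ^ γ) x ^ (1 / γ)
        ≤ ballAverageConst n ^ (1 / γ) * morreyNormE n ∞ τ G := by
      intro x
      have : HLmax (fun y => G y ^ γ) x ≤ ballAverageConst n * morreyNormE n ∞ τ G ^ γ := by
        refine HLmax_le fun R hR => ?_
        obtain ⟨K, hK⟩ := exists_mem_Ioc_two_zpow_neg hR
        simpa [hnτ] using ball_average_rpow_le hγ hγp.le τ hG x hK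
      refine (ENNReal.rpow_le_rpow this (by positivity)).trans_eq ?_
      rw [ENNReal.mul_rpow_of_nonneg _ _ (by positivity), ← ENNReal.rpow_mul,
        mul_one_div_cancel hγ.ne', ENNReal.rpow_one]
    rw [mul_right_comm, hnτ]
    simpa using LpOn_le_of_forall_le hp0 hmax (dyadicCube n J v)
  · have hP : γ < p.toReal := (ENNReal.ofReal_lt_iff_lt_toReal hγ.le hp).1 hγp
    have hP0 : 0 < p.toReal := hγ.trans hP
    have hq : 1 < p.toReal / γ := (one_lt_div hγ).2 hP
    have hA := ballAverageConst_ne_top (n := n)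
    exact ⟨_, by finiteness, fun G hG _ => morreyNormE_le
      (LpOn_HLmax_le hγ hγp hp (fun f hf => lintegral_HLmax_rpow_le hf hq) hτ hG)⟩

end Morrey

/-- **Boundedness of the `γ`-power Hardy–Littlewood maximal operator on Morrey spaces.**
For `0 < γ < p ≤ ∞` and `τ ≥ 0` (including `τ = 1/p` via `M^p_{1/p} = L^∞` and `τ > 1/p`
via `M^p_τ = {0}`), there is `C > 0` with
`‖(M(|g|^γ))^{1/γ}‖_{M^p_τ} ≤ C ‖g‖_{M^p_τ}`. -/
theorem stmt14 (n : ℕ) (γ : ℝ) (p : ℝ≥0∞) (τ : ℝ) (hγ : 0 < γ)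
    (hγp : ENNReal.ofReal γ < p) (hτ : 0 ≤ τ) :
    ∃ C : ℝ≥0∞, 0 < C ∧ C < ∞ ∧
      ∀ g : EuclideanSpace ℝ (Fin n) → ℝ, Measurable g →
        morreyNormE n p τ
            (fun x => (HLmax (fun z => ENNReal.ofReal (|g z| ^ γ)) x) ^ (1 / γ))
          ≤ C * morreyNormE n p τ (fun x => ENNReal.ofReal |g x|) := by
  obtain ⟨C, hC, h⟩ := exists_morreyNormE_HLmax_le n hγ hγp hτ
  refine ⟨C + 1, by positivity, by finiteness, fun g hg => ?_⟩
  have hpow : (fun z => ENNReal.ofReal (|g z| ^ γ)) = fun z => ENNReal.ofReal |g z| ^ γ :=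
    funext fun z => (ENNReal.ofReal_rpow_of_nonneg (abs_nonneg _) hγ.le).symm
  rw [hpow]
  by_cases hN : morreyNormE n p τ (fun x => ENNReal.ofReal |g x|) = ∞
  · rw [hN, ENNReal.mul_top (by positivity)]
    exact le_top
  · refine (h _ (by fun_prop) hN).trans ?_
    gcongr
    exact le_self_add
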